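/- Let $f \in \mathbb{Z}[x_1, \dots, x_{d_1}, z_1, \dots, z_{d_2}]$ be a polynomial with integer coefficients and total degree at most $D$. Let $P \subseteq \mathbb{R}^{d_1} \times \mathbb{R}^{d_2}$ be a polytope, and let $\Delta$ be a positive integer such that for every $z \in \mathbb{Z}^{d_2}$ the scaled slice $\Delta P_z = \{\Delta x : (x,z) \in P\}$ is an integral polytope. Let $m = k\Delta$ where $k$ is an integer with $k \ge D \, d_1$. Then $f$ is constant on $P \cap (\mathbb{R}^{d_1} \times \mathbb{Z}^{d_2})$ if and only if $f$ is constant on $P \cap (\frac{1}{m}\mathbb{Z}^{d_1} \times \mathbb{Z}^{d_2})$. -/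

import Mathlib

/-!
Each integer slice of `P` is the convex hull of a set `S` of points of `(1/Δ)ℤ^{d₁}`. Let `p` be
the restriction of `f` to such a slice. The average of any `k` points of `S` (with repetition) lies
in the slice and in `(1/(kΔ))ℤ^{d₁}`, so `p` takes the same value at all these averages. Along an
affine map sending the origin and the unit vectors to points of `S`, the averages are the images of
the points `a / k` with `a` a tuple of naturals of sum at most `k`. No nonzero polynomial of degree
at most `k` vanishes at all of these: by the combinatorial Nullstellensatz, if `t` is a monomial of
top degree, the polynomial does not vanish on the whole box `∏ {0, …, t i}`, scaled by `1 / k`.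
Hence `p` is constant on the affine span of `S`.
-/

open MvPolynomial
open scoped Pointwise

section Substitution

variable {R A σ τ : Type*} [CommSemiring R] [CommSemiring A] [Algebra R A]

theorem totalDegree_aeval_le_of_totalDegree_le_one {g : τ → MvPolynomial σ A}
    (hg : ∀ i, (g i).totalDegree ≤ 1) (f : MvPolynomial τ R) :
    (aeval g f).totalDegree ≤ f.totalDegree := by
  rw [aeval_def, eval₂_eq]
  refine totalDegree_finsetSum_le fun d hd => ?_
  have hpow (i : τ) : (g i ^ d i).totalDegree ≤ d i :=
    (totalDegree_pow _ _).trans (mul_le_of_le_one_right' (hg i))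
  rw [MvPolynomial.algebraMap_apply, C_mul']
  calc (algebraMap R A (coeff d f) • ∏ i ∈ d.support, g i ^ d i).totalDegree
      ≤ (∏ i ∈ d.support, g i ^ d i).totalDegree := totalDegree_smul_le _ _
    _ ≤ ∑ i ∈ d.support, (g i ^ d i).totalDegree := totalDegree_finsetProd _ _
    _ ≤ ∑ i ∈ d.support, d i := Finset.sum_le_sum fun i _ => hpow i
    _ ≤ f.totalDegree := le_totalDegree hd

theorem eval_aeval (x : σ → A) (g : τ → MvPolynomial σ A) (f : MvPolynomial τ R) :
    eval x (aeval g f) = aeval (fun i => eval x (g i)) f := by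
  rw [← coe_aeval_eq_eval, RingHom.coe_coe]
  exact comp_aeval_apply _ ((aeval x).restrictScalars R) f

theorem totalDegree_C_mul_X_le_one (a : A) (i : σ) :
    (C a * X i : MvPolynomial σ A).totalDegree ≤ 1 := by
  rw [C_mul_X_eq_monomial]
  exact (totalDegree_monomial_le _ _).trans_eq (Finsupp.sum_single_index rfl)

/-- The polynomial `t ↦ f (b + ∑ i, t i • v i)`, the pullback of `f` along the affine
parametrization with base point `b` and directions `v i`. -/
noncomputable def affinePullback [Fintype σ] (b : τ → A) (v : σ → τ → A) (f : MvPolynomial τ R) :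
    MvPolynomial σ A :=
  aeval (fun j => C (b j) + ∑ i, C (v i j) * X i) f

theorem eval_affinePullback [Fintype σ] (b : τ → A) (v : σ → τ → A) (f : MvPolynomial τ R)
    (t : σ → A) : eval t (affinePullback b v f) = aeval (b + ∑ i, t i • v i) f := by
  rw [affinePullback, eval_aeval]
  congr 2 with j
  simp [mul_comm]

theorem totalDegree_affinePullback_le [Fintype σ] (b : τ → A) (v : σ → τ → A)
    (f : MvPolynomial τ R) : (affinePullback b v f).totalDegree ≤ f.totalDegree := by
  refine totalDegree_aeval_le_of_totalDegree_le_one (fun j => ?_) f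
  refine (totalDegree_add _ _).trans (max_le ?_ ?_)
  · simp
  · exact totalDegree_finsetSum_le fun i _ => totalDegree_C_mul_X_le_one _ _

/-- The polynomial `x ↦ f (x, z)`: the restriction of `f` to the slice at `z`. -/
noncomputable def slicePolynomial (z : τ → A) (f : MvPolynomial (σ ⊕ τ) R) : MvPolynomial σ A :=
  aeval (Sum.elim X fun j => C (z j)) f

theorem eval_slicePolynomial (x : σ → A) (z : τ → A) (f : MvPolynomial (σ ⊕ τ) R) :
    eval x (slicePolynomial z f) = aeval (Sum.elim x z) f := by
  rw [slicePolynomial, eval_aeval]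
  congr 2 with (i | j) <;> simp

theorem totalDegree_slicePolynomial_le (z : τ → A) (f : MvPolynomial (σ ⊕ τ) R) :
    (slicePolynomial z f).totalDegree ≤ f.totalDegree := by
  refine totalDegree_aeval_le_of_totalDegree_le_one ?_ f
  rintro (i | j)
  · simpa using totalDegree_C_mul_X_le_one (1 : A) i
  · simp

end Substitution

section Interpolation

theorem eq_zero_of_eval_eq_zero_of_degree_le {σ R : Type*} [Finite σ] [CommRing R] [IsDomain R]
    {q : MvPolynomial σ R} {k : ℕ} (hq : q.totalDegree ≤ k) {g : ℕ → R}
    (hg : Function.Injective g)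
    (h : ∀ a : σ →₀ ℕ, a.degree ≤ k → eval (fun i => g (a i)) q = 0) : q = 0 := by
  classical
  by_contra hq0
  obtain ⟨t, ht, hdeg⟩ : ∃ t ∈ q.support, q.totalDegree = t.degree :=
    q.support.exists_mem_eq_sup (support_nonempty.2 hq0) _
  obtain ⟨y, hy, hne⟩ := combinatorial_nullstellensatz_exists_eval_nonzero q t
    (mem_support_iff.1 ht) hdeg (fun i => (Finset.range (t i + 1)).image g)
    (by simp [Finset.card_image_of_injective _ hg])
  simp only [Finset.mem_image, Finset.mem_range, Nat.lt_succ_iff] at hy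
  choose a hat hay using hy
  have hle : Finsupp.equivFunOnFinite.symm a ≤ t := hat
  refine hne ?_
  rw [← funext hay]
  exact h (Finsupp.equivFunOnFinite.symm a) ((Finsupp.degree_mono hle).trans (hdeg.ge.trans hq))

theorem exists_eq_add_sum_smul_sub_of_mem_affineSpan {K E : Type*} [Ring K] [AddCommGroup E]
    [Module K E] {S : Set E} {b x : E} (hb : b ∈ S) (hx : x ∈ affineSpan K S) :
    ∃ (n : ℕ) (t : Fin n → K) (v : Fin n → S), x = b + ∑ i, t i • ((v i : E) - b) := by
  have hmem : x - b ∈ Submodule.span K ((· - b) '' S) := by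
    have := AffineSubspace.vsub_mem_direction hx (mem_affineSpan K hb)
    rwa [direction_affineSpan, vectorSpan_eq_span_vsub_set_right K hb] at this
  obtain ⟨n, t, u, hu⟩ := Submodule.mem_span_set'.1 hmem
  choose v hvS hv using fun i => (u i).2
  refine ⟨n, t, fun i => ⟨v i, hvS i⟩, ?_⟩
  rw [eq_add_of_sub_eq' hu.symm]
  exact congrArg _ (Finset.sum_congr rfl fun i _ => congrArg _ (hv i).symm)

variable {K ι : Type*} [Field K]

theorem exists_multiset_average_eq_add_sum [CharZero K] {E : Type*} [AddCommGroup E] [Module K E]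
    {σ : Type*} [Fintype σ] {S : Set E} {b : E} (hb : b ∈ S) (v : σ → S) {k : ℕ} (hk : k ≠ 0)
    {a : σ →₀ ℕ} (ha : a.degree ≤ k) :
    ∃ s : Multiset E, s.card = k ∧ (∀ y ∈ s, y ∈ S) ∧
      (k : K)⁻¹ • s.sum = b + ∑ i, ((a i : K) / k) • ((v i : E) - b) := by
  rw [Finsupp.degree_eq_sum] at ha
  refine ⟨Multiset.replicate (k - ∑ i, a i) b + ∑ i, Multiset.replicate (a i) (v i : E),
    ?_, ?_, ?_⟩
  · simp [ha]
  · intro y hy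
    rcases Multiset.mem_add.1 hy with hy | hy
    · exact Multiset.eq_of_mem_replicate hy ▸ hb
    · obtain ⟨i, -, hi⟩ := Multiset.mem_sum.1 hy
      exact Multiset.eq_of_mem_replicate hi ▸ (v i).2
  · have hk0 : (k : K) ≠ 0 := Nat.cast_ne_zero.2 hk
    simp only [Multiset.sum_add, Multiset.sum_sum, Multiset.sum_replicate,
      ← Nat.cast_smul_eq_nsmul K, Nat.cast_sub ha, Nat.cast_sum, smul_sub, Finset.sum_sub_distrib,
      smul_add, sub_smul, Finset.smul_sum, smul_smul, div_eq_inv_mul, Finset.sum_smul,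
      inv_mul_cancel₀ hk0, one_smul]
    abel

theorem eval_eq_of_mem_affineSpan_of_average [CharZero K] {p : MvPolynomial ι K} {k : ℕ}
    (hk : k ≠ 0) (hp : p.totalDegree ≤ k) {S : Set (ι → K)} {c : K}
    (hc : ∀ s : Multiset (ι → K), s.card = k → (∀ y ∈ s, y ∈ S) → eval ((k : K)⁻¹ • s.sum) p = c)
    {x : ι → K} (hx : x ∈ affineSpan K S) : eval x p = c := by
  obtain ⟨b, hb⟩ := (affineSpan_nonempty K).1 ⟨x, hx⟩
  obtain ⟨n, t, v, rfl⟩ := exists_eq_add_sum_smul_sub_of_mem_affineSpan hb hx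
  set q := affinePullback b (fun i => (v i : ι → K) - b) p - C c with hq_def
  have hdeg : q.totalDegree ≤ k :=
    (totalDegree_sub_C_le _ _).trans ((totalDegree_affinePullback_le _ _ _).trans hp)
  have heval (u : Fin n → K) : eval u q = eval (b + ∑ i, u i • ((v i : ι → K) - b)) p - c := by
    rw [hq_def, eval_sub, eval_C, eval_affinePullback, aeval_eq_eval]
  have hinj : Function.Injective fun j : ℕ => (j : K) / k :=
    fun i j hij => by simpa [hk] using hij
  have hq : q = 0 := eq_zero_of_eval_eq_zero_of_degree_le hdeg hinj fun a ha => by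
    obtain ⟨s, hcard, hS, havg⟩ := exists_multiset_average_eq_add_sum (K := K) hb v hk ha
    rw [heval, ← havg, hc s hcard hS, sub_self]
  rw [← sub_eq_zero, ← heval, hq, map_zero]

theorem exists_int_multiset_sum_apply_eq_div {Δ : ℕ} {s : Multiset (ι → K)}
    (hs : ∀ y ∈ s, ∀ i, ∃ n : ℤ, y i = n / Δ) (i : ι) : ∃ n : ℤ, s.sum i = n / Δ := by
  induction s using Multiset.induction_on with
  | empty => exact ⟨0, by simp⟩
  | cons y s ih =>
    obtain ⟨n, hn⟩ := hs y (Multiset.mem_cons_self y s) i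
    obtain ⟨l, hl⟩ := ih fun u hu => hs u (Multiset.mem_cons_of_mem hu)
    exact ⟨n + l, by simp [hn, hl, add_div]⟩

end Interpolation

section Slices

variable {K : Type*} [Field K] [LinearOrder K] [IsStrictOrderedRing K] {ι κ : Type*}

theorem inv_card_smul_sum_mem_convexHull {E : Type*} [AddCommGroup E] [Module K E] {S : Set E}
    {s : Multiset E} (hs : s ≠ 0) (hS : ∀ y ∈ s, y ∈ S) :
    (s.card : K)⁻¹ • s.sum ∈ convexHull K S := by
  classical
  have hcard : (s.card : K) ≠ 0 := by simpa using hs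
  rw [Finset.sum_multiset_count, Finset.smul_sum]
  simp only [← Nat.cast_smul_eq_nsmul K, smul_smul]
  refine (convex_convexHull K S).sum_mem (fun y _ => by positivity) ?_ fun y hy =>
    subset_convexHull K S (hS y (Multiset.mem_toFinset.1 hy))
  rw [← Finset.mul_sum, ← Nat.cast_sum, Multiset.toFinset_sum_count_eq, inv_mul_cancel₀ hcard]

theorem eval_eq_on_convexHull_of_eq_on_lattice {p : MvPolynomial ι K} {k Δ : ℕ} (hk : k ≠ 0)
    (hp : p.totalDegree ≤ k) {S : Set (ι → K)} (hS : ∀ y ∈ S, ∀ i, ∃ n : ℤ, y i = n / Δ) {c : K}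
    (hc : ∀ y ∈ convexHull K S, (∀ i, ∃ n : ℤ, y i = n / (k * Δ : ℕ)) → eval y p = c)
    {x : ι → K} (hx : x ∈ convexHull K S) : eval x p = c := by
  refine eval_eq_of_mem_affineSpan_of_average hk hp (fun s hcard hsS => ?_)
    (convexHull_subset_affineSpan S hx)
  subst hcard
  refine hc _ (inv_card_smul_sum_mem_convexHull (by simpa using hk) hsS) fun i => ?_
  obtain ⟨n, hn⟩ := exists_int_multiset_sum_apply_eq_div (fun y hy => hS y (hsS y hy)) i
  exact ⟨n, by rw [Pi.smul_apply, hn, smul_eq_mul, Nat.cast_mul]; field_simp⟩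

theorem eq_convexHull_div_of_smul_eq_convexHull {Q : Set (ι → K)} {V : Set (ι → ℤ)} {Δ : ℕ}
    (hΔ : Δ ≠ 0) (hQ : (Δ : K) • Q = convexHull K ((fun v i => (v i : K)) '' V)) :
    Q = convexHull K ((fun v i => (v i : K) / Δ) '' V) := by
  rw [← inv_smul_smul₀ (Nat.cast_ne_zero.2 hΔ : (Δ : K) ≠ 0) Q, hQ, ← convexHull_smul,
    ← Set.image_smul, Set.image_image]
  simp only [div_eq_inv_mul, Pi.smul_def, smul_eq_mul]

theorem aeval_eq_on_slice_of_eq_on_lattice {R : Type*} [CommSemiring R] [Algebra R K]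
    {f : MvPolynomial (ι ⊕ κ) R} {k Δ : ℕ} (hk : k ≠ 0) (hΔ : Δ ≠ 0) (hf : f.totalDegree ≤ k)
    {z : κ → K} {Q : Set (ι → K)} {V : Set (ι → ℤ)}
    (hQ : (Δ : K) • Q = convexHull K ((fun v i => (v i : K)) '' V)) {c : K}
    (hc : ∀ y ∈ Q, (∀ i, ∃ n : ℤ, y i = n / (k * Δ : ℕ)) → aeval (Sum.elim y z) f = c)
    {x : ι → K} (hx : x ∈ Q) : aeval (Sum.elim x z) f = c := by
  simp only [← eval_slicePolynomial] at hc ⊢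
  rw [eq_convexHull_div_of_smul_eq_convexHull hΔ hQ] at hc hx
  refine eval_eq_on_convexHull_of_eq_on_lattice hk
    ((totalDegree_slicePolynomial_le z f).trans hf) ?_ hc hx
  rintro _ ⟨v, -, rfl⟩ i
  exact ⟨v i, rfl⟩

theorem stmt_7_general {R : Type*} [CommSemiring R] [Algebra R K] (f : MvPolynomial (ι ⊕ κ) R)
    (P : Set ((ι → K) × (κ → K))) (Δ : ℕ) (hΔ : 0 < Δ)
    (hslice : ∀ z : κ → ℤ, ∃ V : Set (ι → ℤ),
      {y : ι → K | ∃ x : ι → K, (x, fun i => (z i : K)) ∈ P ∧ y = fun i => (Δ : K) * x i}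
        = convexHull K ((fun v : ι → ℤ => fun i => (v i : K)) '' V))
    (k m : ℕ) (hk : f.totalDegree ≤ k) (hm : m = k * Δ) :
    (∀ xz ∈ P, (∀ i, ∃ n : ℤ, xz.2 i = (n : K)) →
     ∀ yw ∈ P, (∀ i, ∃ n : ℤ, yw.2 i = (n : K)) →
       aeval (Sum.elim xz.1 xz.2) f = aeval (Sum.elim yw.1 yw.2) f) ↔
    (∀ xz ∈ P, (∀ i, ∃ n : ℤ, xz.1 i = (n : K) / (m : K)) → (∀ i, ∃ n : ℤ, xz.2 i = (n : K)) →
     ∀ yw ∈ P, (∀ i, ∃ n : ℤ, yw.1 i = (n : K) / (m : K)) → (∀ i, ∃ n : ℤ, yw.2 i = (n : K)) →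
       aeval (Sum.elim xz.1 xz.2) f = aeval (Sum.elim yw.1 yw.2) f) := by
  refine ⟨fun h xz hxz _ hz yw hyw _ hw => h xz hxz hz yw hyw hw, fun h => ?_⟩
  obtain rfl | hk0 := eq_or_ne k 0
  · intro xz _ _ yw _ _
    rw [totalDegree_eq_zero_iff_eq_C.1 (Nat.le_zero.1 hk), aeval_C, aeval_C]
  subst hm
  have hconst {c : K} (hc : ∀ xz ∈ P, (∀ i, ∃ n : ℤ, xz.1 i = n / (k * Δ : ℕ)) →
      (∀ i, ∃ n : ℤ, xz.2 i = n) → aeval (Sum.elim xz.1 xz.2) f = c) :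
      ∀ xz ∈ P, (∀ i, ∃ n : ℤ, xz.2 i = n) → aeval (Sum.elim xz.1 xz.2) f = c := by
    rintro ⟨x, w⟩ hxP hw
    choose z hz using hw
    obtain rfl : w = fun i => (z i : K) := funext hz
    obtain ⟨V, hV⟩ := hslice z
    have hV_smul : (Δ : K) • {x | (x, fun i => (z i : K)) ∈ P} = _ :=
      (Set.ext fun y => exists_congr fun x => and_congr_right' eq_comm).trans hV
    exact aeval_eq_on_slice_of_eq_on_lattice hk0 hΔ.ne' hk hV_smul
      (fun y hy hlat => hc (y, _) hy hlat fun i => ⟨z i, rfl⟩) hxP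
  intro xz hxz hz yw hyw hw
  refine hconst (fun xz' hxz' hx' hz' => ?_) xz hxz hz
  exact (hconst (fun yw' hyw' hy' hw' => h yw' hyw' hy' hw' xz' hxz' hx' hz') yw hyw hw).symm

end Slices

/-- mixed-integer constancy test. Let `f` be an integer polynomial
in variables `(x, z)` of total degree at most `D`, `P` a polytope, and `Δ` a
positive integer such that every scaled slice `Δ·P_z` (for integer `z`) is an
integral polytope. If `m = kΔ` with `k ≥ D·d₁`, then `f` is constant on
`P ∩ (ℝ^{d₁} × ℤ^{d₂})` iff it is constant on `P ∩ ((1/m)ℤ^{d₁} × ℤ^{d₂})`. -/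
theorem stmt_7 (d1 d2 D : ℕ) (f : MvPolynomial (Fin d1 ⊕ Fin d2) ℤ)
    (hdeg : f.totalDegree ≤ D)
    (P : Set ((Fin d1 → ℝ) × (Fin d2 → ℝ)))
    (hpoly : ∃ W : Finset ((Fin d1 → ℝ) × (Fin d2 → ℝ)), P = convexHull ℝ (W : Set _))
    (Δ : ℕ) (hΔ : 0 < Δ)
    (hslice : ∀ z : Fin d2 → ℤ, ∃ V : Finset (Fin d1 → ℤ),
      {y : Fin d1 → ℝ | ∃ x : Fin d1 → ℝ,
          (x, fun i => (z i : ℝ)) ∈ P ∧ y = fun i => (Δ : ℝ) * x i}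
        = convexHull ℝ ((fun v : Fin d1 → ℤ => fun i => (v i : ℝ)) '' (V : Set (Fin d1 → ℤ))))
    (k m : ℕ) (hk : D * d1 ≤ k) (hm : m = k * Δ) :
    (∀ xz ∈ P, (∀ i, ∃ n : ℤ, xz.2 i = (n : ℝ)) →
     ∀ yw ∈ P, (∀ i, ∃ n : ℤ, yw.2 i = (n : ℝ)) →
       MvPolynomial.aeval (Sum.elim xz.1 xz.2) f
         = MvPolynomial.aeval (Sum.elim yw.1 yw.2) f) ↔
    (∀ xz ∈ P, (∀ i, ∃ n : ℤ, xz.1 i = (n : ℝ) / (m : ℝ)) → (∀ i, ∃ n : ℤ, xz.2 i = (n : ℝ)) →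
     ∀ yw ∈ P, (∀ i, ∃ n : ℤ, yw.1 i = (n : ℝ) / (m : ℝ)) → (∀ i, ∃ n : ℤ, yw.2 i = (n : ℝ)) →
       MvPolynomial.aeval (Sum.elim xz.1 xz.2) f
         = MvPolynomial.aeval (Sum.elim yw.1 yw.2) f) := by
  obtain rfl | hd1 := d1.eq_zero_or_pos
  · simp only [IsEmpty.forall_iff, forall_const]
  · exact stmt_7_general f P Δ hΔ (fun z => (hslice z).imp' _ fun V hV => hV) k m
      (hdeg.trans ((Nat.le_mul_of_pos_right D hd1).trans hk)) hm
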